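/- There exists a function g, analytic on ℂ ∖ {0, 1}, such that g(s) = ξ_{ℚ,2}(s) for all s ∉ {0, 1/2, 1} (so the apparent singularity of ξ_{ℚ,2} at s = 1/2 is removable), and g has simple poles at s = 0 and s = 1 with lim_{s→1} (s−1)·g(s) = ξ(2) − 1/2 ≠ 0 and lim_{s→0} s·g(s) = 1/2 − ξ(2) ≠ 0; in particular the two residues are negatives of each other. -/

import Mathlib

open Filter Topology

/-- The rank-two non-abelian zeta function of `ℚ`:
`ξ_{ℚ,2}(s) = ξ(2s)/(s-1) − ξ(2s-1)/s`, where `ξ` is the completed Riemann zeta function. -/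
noncomputable def xiQ2 (s : ℂ) : ℂ :=
  completedRiemannZeta (2 * s) / (s - 1) - completedRiemannZeta (2 * s - 1) / s

/-!
Write `ξ(s) = ξ₀(s) - 1/s - 1/(1 - s)` with `ξ₀` entire. The two elementary fractions contribute
`1/(2s(s - 1)(2s - 1))` both to `ξ(2s)/(s - 1)` and to `ξ(2s - 1)/s`, so they cancel in the
difference and `ξ` may be replaced by `ξ₀` in the definition of `ξ_{ℚ,2}`. The residue at `1` is
then `ξ₀(2) = ξ(2) - 1/2 = (π - 3)/6`, and the residue at `0` is its negative because the
functional equation of `ξ₀` makes the extension invariant under `s ↦ 1 - s`.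
-/

theorem tendsto_sub_mul_div_sub_sub {𝕜 : Type*} [Field 𝕜] [TopologicalSpace 𝕜]
    [IsTopologicalRing 𝕜] {f h : 𝕜 → 𝕜} {a : 𝕜} (hf : ContinuousAt f a) (hh : ContinuousAt h a) :
    Tendsto (fun s => (s - a) * (f s / (s - a) - h s)) (𝓝[≠] a) (𝓝 (f a)) := by
  have hcont : ContinuousAt (fun s => f s - (s - a) * h s) a := by fun_prop
  have hlim : Tendsto (fun s => f s - (s - a) * h s) (𝓝[≠] a) (𝓝 (f a)) := by
    simpa using hcont.tendsto.mono_left nhdsWithin_le_nhds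
  refine hlim.congr' ?_
  filter_upwards [self_mem_nhdsWithin] with s hs
  rw [mul_sub, mul_div_cancel₀ _ (sub_ne_zero.2 hs)]

theorem tendsto_sub_mul_of_reflection {R : Type*} [Ring R] [TopologicalSpace R]
    [IsTopologicalRing R] {g : R → R} {b c r : R} (hg : ∀ s, g (c - s) = g s)
    (hr : Tendsto (fun s => (s - b) * g s) (𝓝[≠] b) (𝓝 r)) :
    Tendsto (fun s => (s - (c - b)) * g s) (𝓝[≠] (c - b)) (𝓝 (-r)) := by
  have hreflect : Tendsto (fun s => c - s) (𝓝[≠] (c - b)) (𝓝[≠] b) := by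
    simpa only [Tendsto, Homeomorph.coe_subLeft, sub_sub_cancel] using
      ((Homeomorph.subLeft c).map_punctured_nhds_eq (c - b)).le
  refine (hr.comp hreflect).neg.congr fun s => ?_
  rw [Function.comp_apply, hg, ← neg_mul]
  congr 1
  abel

theorem completedRiemannZeta_two : completedRiemannZeta 2 = (Real.pi : ℂ) / 6 := by
  have hpi : (Real.pi : ℂ) ≠ 0 := Complex.ofReal_ne_zero.2 Real.pi_ne_zero
  have hGamma : Complex.Gammaℝ 2 = (Real.pi : ℂ)⁻¹ := by
    norm_num [Complex.Gammaℝ_def, Complex.cpow_neg_one]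
  have hzeta := riemannZeta_def_of_ne_zero (two_ne_zero : (2 : ℂ) ≠ 0)
  rw [riemannZeta_two, hGamma] at hzeta
  field_simp at hzeta
  linear_combination -hzeta / 6

theorem completedRiemannZeta_two_ne_half : completedRiemannZeta 2 ≠ 1 / 2 := by
  intro h
  have hpi : (Real.pi : ℂ) = (3 : ℝ) := by
    push_cast
    linear_combination 6 * h - 6 * completedRiemannZeta_two
  exact Real.pi_gt_three.ne' (Complex.ofReal_injective hpi)

theorem completedRiemannZeta₀_two :
    completedRiemannZeta₀ 2 = completedRiemannZeta 2 - 1 / 2 := by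
  rw [completedRiemannZeta_eq]
  ring

/-- The extension of `ξ_{ℚ,2}` to `ℂ ∖ {0, 1}`, obtained by replacing `ξ` in its definition by the
entire function `ξ₀(s) = ξ(s) + 1/s + 1/(1 - s)`. At `0` and `1` it takes junk values. -/
noncomputable def xiQ2₀ (s : ℂ) : ℂ :=
  completedRiemannZeta₀ (2 * s) / (s - 1) - completedRiemannZeta₀ (2 * s - 1) / s

theorem xiQ2₀_eq_xiQ2 {s : ℂ} (hs₀ : s ≠ 0) (hs_half : s ≠ 1 / 2) (hs₁ : s ≠ 1) :
    xiQ2₀ s = xiQ2 s := by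
  have hs₁' : s - 1 ≠ 0 := sub_ne_zero.2 hs₁
  have hs_half' : 2 * s - 1 ≠ 0 := fun h => hs_half (by linear_combination h / 2)
  have hpolar : (1 / (2 * s) + 1 / (1 - 2 * s)) / (s - 1) =
      (1 / (2 * s - 1) + 1 / (1 - (2 * s - 1))) / s := by
    rw [← neg_sub (2 * s) 1, show 1 - (2 * s - 1) = -(2 * (s - 1)) by ring]
    field_simp
    ring
  rw [xiQ2₀, xiQ2, completedRiemannZeta_eq, completedRiemannZeta_eq]
  linear_combination hpolar

theorem xiQ2₀_one_sub (s : ℂ) : xiQ2₀ (1 - s) = xiQ2₀ s := by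
  have hleft : completedRiemannZeta₀ (2 * (1 - s)) = completedRiemannZeta₀ (2 * s - 1) := by
    rw [← completedRiemannZeta₀_one_sub]
    ring_nf
  have hright : completedRiemannZeta₀ (2 * (1 - s) - 1) = completedRiemannZeta₀ (2 * s) := by
    rw [← completedRiemannZeta₀_one_sub]
    ring_nf
  rw [xiQ2₀, xiQ2₀, hleft, hright, sub_sub_cancel_left, div_neg, ← neg_sub s 1, div_neg]
  ring

theorem differentiableAt_xiQ2₀ {s : ℂ} (hs₀ : s ≠ 0) (hs₁ : s ≠ 1) :
    DifferentiableAt ℂ xiQ2₀ s := by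
  have hentire := differentiable_completedZeta₀
  have hs₁' : s - 1 ≠ 0 := sub_ne_zero.2 hs₁
  unfold xiQ2₀
  fun_prop (disch := assumption)

theorem analyticOnNhd_xiQ2₀ : AnalyticOnNhd ℂ xiQ2₀ ({0, 1} : Set ℂ)ᶜ := by
  refine DifferentiableOn.analyticOnNhd (fun s hs => ?_) (Set.toFinite _).isClosed.isOpen_compl
  obtain ⟨hs₀, hs₁⟩ : s ≠ 0 ∧ s ≠ 1 := by simpa using hs
  exact (differentiableAt_xiQ2₀ hs₀ hs₁).differentiableWithinAt

theorem xiQ2₀_residue_one :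
    Tendsto (fun s => (s - 1) * xiQ2₀ s) (𝓝[≠] 1) (𝓝 (completedRiemannZeta 2 - 1 / 2)) := by
  have hcont := differentiable_completedZeta₀.continuous
  have hnum : ContinuousAt (fun s : ℂ => completedRiemannZeta₀ (2 * s)) 1 := by fun_prop
  have hrest : ContinuousAt (fun s : ℂ => completedRiemannZeta₀ (2 * s - 1) / s) 1 := by
    fun_prop (disch := exact one_ne_zero)
  simpa only [mul_one, completedRiemannZeta₀_two] using! tendsto_sub_mul_div_sub_sub hnum hrest

theorem xiQ2₀_residue_zero :
    Tendsto (fun s => s * xiQ2₀ s) (𝓝[≠] 0) (𝓝 (1 / 2 - completedRiemannZeta 2)) := by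
  simpa only [sub_self, sub_zero, neg_sub] using
    tendsto_sub_mul_of_reflection xiQ2₀_one_sub xiQ2₀_residue_one

/-- There is a function `g`, analytic on `ℂ ∖ {0,1}`, agreeing with `ξ_{ℚ,2}` away from
`{0, 1/2, 1}` (so the singularity at `1/2` is removable), with simple poles at `0` and `1`:
`(s−1)·g(s) → ξ(2) − 1/2 ≠ 0` as `s → 1` and `s·g(s) → 1/2 − ξ(2) ≠ 0` as `s → 0`;
in particular the two residues are negatives of each other. -/
theorem xiQ2_extension :
    ∃ g : ℂ → ℂ,
      AnalyticOnNhd ℂ g ({0, 1} : Set ℂ)ᶜ ∧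
      (∀ s : ℂ, s ∉ ({0, 1/2, 1} : Set ℂ) → g s = xiQ2 s) ∧
      Tendsto (fun s : ℂ => (s - 1) * g s) (𝓝[≠] 1)
        (𝓝 (completedRiemannZeta 2 - 1/2)) ∧
      completedRiemannZeta 2 - 1/2 ≠ 0 ∧
      Tendsto (fun s : ℂ => s * g s) (𝓝[≠] 0)
        (𝓝 (1/2 - completedRiemannZeta 2)) ∧
      1/2 - completedRiemannZeta 2 ≠ 0 ∧
      completedRiemannZeta 2 - 1/2 = -(1/2 - completedRiemannZeta 2) := by
  refine ⟨xiQ2₀, analyticOnNhd_xiQ2₀, fun s hs => ?_,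
    xiQ2₀_residue_one, sub_ne_zero.2 completedRiemannZeta_two_ne_half,
    xiQ2₀_residue_zero, sub_ne_zero.2 completedRiemannZeta_two_ne_half.symm, (neg_sub _ _).symm⟩
  simp only [Set.mem_insert_iff, Set.mem_singleton_iff, not_or] at hs
  exact xiQ2₀_eq_xiQ2 hs.1 hs.2.1 hs.2.2
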